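/- Let H and K be complex Hilbert spaces and let A : H → K be a compact linear operator with singular value decomposition A f = Σ_{n<r} σ_n ⟨f, ψ_n⟩ φ_n. For α > 0 let T_α = (A* A + α I)^{-1} A* : K → H be the Tikhonov–Phillips regularization operator. Then for every g ∈ D(A†) one has T_α g → A† g in H as α ↓ 0. -/

import Mathlib

/-!
For every bounded operator `A`, the error `e = x - x_α` of the Tikhonov approximation to a solution
`x` of the normal equation `A†A x = A†g` satisfies `(A†A + α) e = α x`. Pairing with `e` shows that
`‖e‖² ≤ α ‖w‖² / 2 + ‖x - A†w‖²` for every `w`; if `x` is orthogonal to `ker A`, it lies in the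
closure of the range of `A†`, so the last term can be made small first and then `α`. The series
`∑ σᵢ⁻¹ ⟨φᵢ, g⟩ ψᵢ` is such an `x`: each `ψᵢ` is orthogonal to `ker A`, and `A x - g` is orthogonal
to every `φᵢ`, hence to the range of `A`.
-/

open Filter Topology
open scoped InnerProduct InnerProductSpace

section Orthonormal

variable {𝕜 E ι : Type*} [RCLike 𝕜] [NormedAddCommGroup E] [InnerProductSpace 𝕜 E]
  {v : ι → E} {c : ι → 𝕜}

lemma inner_eq_of_hasSum_smul_orthonormal (hv : Orthonormal 𝕜 v) {x : E}
    (h : HasSum (fun i => c i • v i) x) (i : ι) : ⟪v i, x⟫_𝕜 = c i := by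
  have hother : ∀ j ≠ i, innerSL 𝕜 (v i) (c j • v j) = 0 := fun j hj => by
    rw [innerSL_apply_apply, inner_smul_right, hv.inner_eq_zero hj.symm, mul_zero]
  rw [← innerSL_apply_apply 𝕜, (h.mapL (innerSL 𝕜 (v i))).unique (hasSum_single i hother),
    innerSL_apply_apply, inner_smul_right, inner_self_eq_norm_sq_to_K, hv.norm_eq_one,
    RCLike.ofReal_one, one_pow, mul_one]

lemma summable_smul_orthonormal_iff [CompleteSpace E] (hv : Orthonormal 𝕜 v) :
    Summable (fun i => c i • v i) ↔ Summable fun i => ‖c i‖ ^ 2 := by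
  simpa only [LinearIsometry.toSpanSingleton_apply] using
    hv.orthogonalFamily.summable_iff_norm_sq_summable c

end Orthonormal

section TikhonovRegularization

variable {𝕜 H K : Type*} [RCLike 𝕜]
  [NormedAddCommGroup H] [InnerProductSpace 𝕜 H] [CompleteSpace H]
  [NormedAddCommGroup K] [InnerProductSpace 𝕜 K] [CompleteSpace K]
  {A : H →L[𝕜] K} {α : ℝ} {g : K} {x y : H}

/-- `y` is the Tikhonov–Phillips regularized solution of `A x = g` with parameter `α`, i.e.
`y = (A†A + α)⁻¹ A† g`, written as an equation so that no inverse has to be named. -/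
def IsTikhonovSolution (A : H →L[𝕜] K) (α : ℝ) (g : K) (y : H) : Prop :=
  (A†) (A y) + (α : 𝕜) • y = (A†) g

/-- `x` is the best-approximate solution of `A x = g`, i.e. the value at `g` of the Moore–Penrose
pseudo-inverse of `A`: it solves the normal equation and is orthogonal to the kernel of `A`. -/
structure IsBestApproximateSolution (A : H →L[𝕜] K) (g : K) (x : H) : Prop where
  normal_eq : (A†) (A x) = (A†) g
  mem_orthogonal_ker : x ∈ A.kerᗮ

lemma norm_sq_le_of_adjoint_comp_add_smul_eq (hα : 0 < α) {e d : H} {w : K}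
    (h : (A†) (A e) + (α : 𝕜) • e = (α : 𝕜) • ((A†) w + d)) :
    ‖e‖ ^ 2 ≤ α / 2 * ‖w‖ ^ 2 + ‖d‖ ^ 2 := by
  have energy_eq : ‖A e‖ ^ 2 + α * ‖e‖ ^ 2 =
      α * (RCLike.re ⟪A e, w⟫_𝕜 + RCLike.re ⟪e, d⟫_𝕜) := by
    have h_re := congrArg (fun z => RCLike.re ⟪e, z⟫_𝕜) h
    simpa only [inner_add_right, inner_smul_right, ContinuousLinearMap.adjoint_inner_right,
      map_add, RCLike.re_ofReal_mul, inner_self_eq_norm_sq] using h_re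
  have energy_le : ‖A e‖ ^ 2 + α * ‖e‖ ^ 2 ≤ α * (‖A e‖ * ‖w‖ + ‖e‖ * ‖d‖) := by
    rw [energy_eq]
    gcongr <;> exact re_inner_le_norm _ _
  have young_image : ‖A e‖ * (α * ‖w‖) ≤ ‖A e‖ ^ 2 + (α * ‖w‖) ^ 2 / 4 := by
    linarith [sq_nonneg (‖A e‖ - α * ‖w‖ / 2)]
  have young_error : α * (‖e‖ * ‖d‖) ≤ α * ((‖e‖ ^ 2 + ‖d‖ ^ 2) / 2) := by
    gcongr
    linarith [two_mul_le_add_sq ‖e‖ ‖d‖]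
  refine le_of_mul_le_mul_left ?_ hα
  linarith

lemma IsTikhonovSolution.norm_sub_sq_le (hα : 0 < α) (hy : IsTikhonovSolution A α g y)
    (hx : (A†) (A x) = (A†) g) (w : K) :
    ‖x - y‖ ^ 2 ≤ α / 2 * ‖w‖ ^ 2 + ‖x - (A†) w‖ ^ 2 := by
  refine norm_sq_le_of_adjoint_comp_add_smul_eq (A := A) hα ?_
  calc (A†) (A (x - y)) + (α : 𝕜) • (x - y)
      = (A†) (A x) + (α : 𝕜) • x - ((A†) (A y) + (α : 𝕜) • y) := by
        rw [map_sub, map_sub, smul_sub]; abel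
    _ = (α : 𝕜) • ((A†) w + (x - (A†) w)) := by
        rw [hy, hx, add_sub_cancel_left, add_sub_cancel]

lemma IsBestApproximateSolution.tendsto_of_isTikhonovSolution
    (hx : IsBestApproximateSolution A g x) {y : ℝ → H}
    (hy : ∀ α, 0 < α → IsTikhonovSolution A α g (y α)) :
    Tendsto y (𝓝[>] 0) (𝓝 x) := by
  rw [Metric.tendsto_nhds]
  intro ε hε
  have hx_closure : x ∈ closure (Set.range (A†)) := A.orthogonal_ker.le hx.mem_orthogonal_ker
  obtain ⟨w, hw⟩ : ∃ w, dist x ((A†) w) < ε :=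
    Metric.mem_closure_range_iff.mp hx_closure ε hε
  have hbound : Tendsto (fun α : ℝ => α / 2 * ‖w‖ ^ 2 + ‖x - (A†) w‖ ^ 2) (𝓝[>] 0)
      (𝓝 (0 / 2 * ‖w‖ ^ 2 + ‖x - (A†) w‖ ^ 2)) :=
    Continuous.tendsto (by fun_prop) 0 |>.mono_left nhdsWithin_le_nhds
  have hlt : 0 / 2 * ‖w‖ ^ 2 + ‖x - (A†) w‖ ^ 2 < ε ^ 2 := by
    rw [zero_div, zero_mul, zero_add, ← dist_eq_norm]
    gcongr
  filter_upwards [hbound.eventually_lt_const hlt, self_mem_nhdsWithin] with α hα_lt hα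
  rw [dist_comm, dist_eq_norm]
  exact lt_of_pow_lt_pow_left₀ 2 hε.le
    (((hy α hα).norm_sub_sq_le hα hx.normal_eq w).trans_lt hα_lt)

end TikhonovRegularization

section SingularSystem

variable {𝕜 H K ι : Type*} [RCLike 𝕜]
  [NormedAddCommGroup H] [InnerProductSpace 𝕜 H] [NormedAddCommGroup K] [InnerProductSpace 𝕜 K]
  {A : H →L[𝕜] K} {σ : ι → ℝ} {ψ : ι → H} {φ : ι → K}

/-- `(σ, ψ, φ)` is a singular system of `A`, i.e. it gives a singular value decomposition
`A f = ∑ i, σ i ⟨ψ i, f⟩ φ i`. The index type is arbitrary and the singular values are unordered. -/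
structure IsSingularSystem (A : H →L[𝕜] K) (σ : ι → ℝ) (ψ : ι → H) (φ : ι → K) : Prop where
  pos : ∀ i, 0 < σ i
  orthonormal_right : Orthonormal 𝕜 ψ
  orthonormal_left : Orthonormal 𝕜 φ
  hasSum : ∀ f, HasSum (fun i => ((σ i : 𝕜) * ⟪ψ i, f⟫_𝕜) • φ i) (A f)

namespace IsSingularSystem

lemma ofReal_ne_zero (hA : IsSingularSystem A σ ψ φ) (i : ι) : (σ i : 𝕜) ≠ 0 :=
  RCLike.ofReal_ne_zero.mpr (hA.pos i).ne'

lemma inner_left_apply (hA : IsSingularSystem A σ ψ φ) (i : ι) (f : H) :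
    ⟪φ i, A f⟫_𝕜 = (σ i : 𝕜) * ⟪ψ i, f⟫_𝕜 :=
  inner_eq_of_hasSum_smul_orthonormal hA.orthonormal_left (hA.hasSum f) i

lemma inner_apply_eq_zero (hA : IsSingularSystem A σ ψ φ) {u : K}
    (hu : ∀ i, ⟪u, φ i⟫_𝕜 = 0) (f : H) : ⟪u, A f⟫_𝕜 = 0 := by
  refine ((hA.hasSum f).mapL (innerSL 𝕜 u)).unique ?_
  simp only [innerSL_apply_apply, inner_smul_right, hu, mul_zero, hasSum_zero]

lemma right_mem_orthogonal_ker (hA : IsSingularSystem A σ ψ φ) (i : ι) : ψ i ∈ A.kerᗮ := by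
  intro f hf
  have hzero : (σ i : 𝕜) * ⟪ψ i, f⟫_𝕜 = 0 := by
    rw [← hA.inner_left_apply, show A f = 0 from hf, inner_zero_right]
  exact inner_eq_zero_symm.mp ((mul_eq_zero_iff_left (hA.ofReal_ne_zero i)).mp hzero)

lemma summable_inv_smul_iff [CompleteSpace H] (hA : IsSingularSystem A σ ψ φ) (g : K) :
    Summable (fun i => ((σ i : 𝕜)⁻¹ * ⟪φ i, g⟫_𝕜) • ψ i) ↔
      Summable fun i => (σ i ^ 2)⁻¹ * ‖⟪φ i, g⟫_𝕜‖ ^ 2 := by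
  rw [summable_smul_orthonormal_iff hA.orthonormal_right]
  simp only [norm_mul, norm_inv, RCLike.norm_ofReal, mul_pow, inv_pow, sq_abs]

lemma isBestApproximateSolution [CompleteSpace H] [CompleteSpace K]
    (hA : IsSingularSystem A σ ψ φ) {g : K} {x : H}
    (hx : HasSum (fun i => ((σ i : 𝕜)⁻¹ * ⟪φ i, g⟫_𝕜) • ψ i) x) :
    IsBestApproximateSolution A g x where
  normal_eq := by
    have residual_orthogonal : ∀ i, ⟪A x - g, φ i⟫_𝕜 = 0 := fun i => by
      rw [inner_eq_zero_symm, inner_sub_right, hA.inner_left_apply,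
        inner_eq_of_hasSum_smul_orthonormal hA.orthonormal_right hx,
        mul_inv_cancel_left₀ (hA.ofReal_ne_zero i), sub_self]
    rw [← sub_eq_zero, ← map_sub]
    refine ext_inner_right 𝕜 fun f => ?_
    rw [ContinuousLinearMap.adjoint_inner_left, inner_zero_left,
      hA.inner_apply_eq_zero residual_orthogonal]
  mem_orthogonal_ker :=
    A.ker.isClosed_orthogonal.mem_of_tendsto hx <| Eventually.of_forall fun _ =>
      Submodule.sum_mem _ fun i _ => Submodule.smul_mem _ _ (hA.right_mem_orthogonal_ker i)

end IsSingularSystem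

theorem tikhonov_converges_to_pseudoinverse_general [CompleteSpace H] [CompleteSpace K]
    (hA : IsSingularSystem A σ ψ φ) {g : K}
    (hg : Summable fun i => (σ i ^ 2)⁻¹ * ‖⟪φ i, g⟫_𝕜‖ ^ 2) {y : ℝ → H}
    (hy : ∀ α, 0 < α → IsTikhonovSolution A α g (y α)) :
    ∃ x, HasSum (fun i => ((σ i : 𝕜)⁻¹ * ⟪φ i, g⟫_𝕜) • ψ i) x ∧ Tendsto y (𝓝[>] 0) (𝓝 x) := by
  obtain ⟨x, hx⟩ := (hA.summable_inv_smul_iff g).mpr hg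
  exact ⟨x, hx, (hA.isBestApproximateSolution hx).tendsto_of_isTikhonovSolution hy⟩

end SingularSystem

/-- **Tikhonov–Phillips regularization converges to the pseudo-inverse.**
Let `A : H → K` be a compact operator between complex Hilbert spaces with singular value
decomposition `A f = Σ_{n<r} σ n ⟨f, ψ n⟩ φ n`, and for `α > 0` let
`T_α = (A* A + α I)⁻¹ A*`, i.e. `T_α u` is the unique solution of
`(A* A + α I)(T_α u) = A* u`.  Then for every `g ∈ D(A†)` one has `T_α g → A† g` in `H`
as `α ↓ 0`, where `A† g = Σ_{n<r} σ n ^ (-1) ⟨g, φ n⟩ ψ n`. -/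
theorem tikhonov_converges_to_pseudoinverse {H K : Type*}
    [NormedAddCommGroup H] [InnerProductSpace ℂ H] [CompleteSpace H]
    [NormedAddCommGroup K] [InnerProductSpace ℂ K] [CompleteSpace K]
    (A : H →L[ℂ] K) (hA : IsCompactOperator A)
    (r : ℕ∞) (σ : ℕ → ℝ) (ψ : ℕ → H) (φ : ℕ → K)
    (hσpos : ∀ n : ℕ, (n : ℕ∞) < r → 0 < σ n)
    (hσmono : ∀ m n : ℕ, (m : ℕ∞) < r → (n : ℕ∞) < r → m ≤ n → σ n ≤ σ m)
    (hψ : Orthonormal ℂ (fun n : {n : ℕ // (n : ℕ∞) < r} => ψ n.1))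
    (hφ : Orthonormal ℂ (fun n : {n : ℕ // (n : ℕ∞) < r} => φ n.1))
    (hsum : ∀ f : H, HasSum
      (fun n : {n : ℕ // (n : ℕ∞) < r} =>
        ((σ n.1 : ℂ) * (inner ℂ (ψ n.1) f : ℂ)) • φ n.1) (A f))
    (D : Set K)
    (hD : D = {g : K | g ∈ (LinearMap.ker (ContinuousLinearMap.adjoint A : K →ₗ[ℂ] H))ᗮ ∧
      Summable (fun n : {n : ℕ // (n : ℕ∞) < r} =>
        (σ n.1 ^ 2)⁻¹ * ‖(inner ℂ (φ n.1) g : ℂ)‖ ^ 2)})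
    (T : ℝ → (K →L[ℂ] H))
    (hT : ∀ α : ℝ, 0 < α → ∀ u : K,
      (ContinuousLinearMap.adjoint A) (A (T α u)) + (α : ℂ) • T α u
        = (ContinuousLinearMap.adjoint A) u) :
    ∀ g ∈ D, ∃ fg : H,
      HasSum (fun n : {n : ℕ // (n : ℕ∞) < r} =>
        (((σ n.1)⁻¹ : ℂ) * (inner ℂ (φ n.1) g : ℂ)) • ψ n.1) fg ∧
      Filter.Tendsto (fun α : ℝ => T α g)
        (nhdsWithin 0 (Set.Ioi 0)) (nhds fg) := by
  subst hD
  exact fun g hg => tikhonov_converges_to_pseudoinverse_general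
    (σ := fun n : {n : ℕ // (n : ℕ∞) < r} => σ n) ⟨fun n => hσpos n n.2, hψ, hφ, hsum⟩ hg.2
    fun α hα => hT α hα g
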